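/- arXiv:2510.04482 — 2 statements merged into one kernel-verified Lean document; each statement's English description precedes it below -/
import Mathlib

section
/- Let p be an at most isolated singular point of D (as in the context). Then rk M'_f(p) = n if and only if p is a smooth point of D, i.e. if and only if (∂g/∂y_i)(q) ≠ 0 for some i ∈ {1,…,n}. -/
open MvPolynomial

noncomputable section

/-- The Jacobian syzygy module `K` of `f`, as a set:
tuples `a = (a_0, …, a_n)` of polynomials with `∑ a_i ∂f/∂x_i = 0`. -/
def syzSet (n : ℕ) (f : MvPolynomial (Fin (n + 1)) ℂ) :
    Set (Fin (n + 1) → MvPolynomial (Fin (n + 1)) ℂ) :=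
  {a | ∑ i, a i * pderiv i f = 0}

/-- The image of the syzygy module under coordinatewise evaluation at `p`. -/
def evSyz (n : ℕ) (f : MvPolynomial (Fin (n + 1)) ℂ) (p : Fin (n + 1) → ℂ) :
    Set (Fin (n + 1) → ℂ) :=
  (fun a => fun i => eval p (a i)) '' syzSet n f

/-- The syzygy rank `rk M'_f(p)`. -/
def syzRank (n : ℕ) (f : MvPolynomial (Fin (n + 1)) ℂ) (p : Fin (n + 1) → ℂ) : ℕ :=
  Module.finrank ℂ (Submodule.span ℂ (evSyz n f p))

/-- The augmented syzygy rank `rk M_f(p)`. -/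
def augSyzRank (n : ℕ) (f : MvPolynomial (Fin (n + 1)) ℂ) (p : Fin (n + 1) → ℂ) : ℕ :=
  Module.finrank ℂ (Submodule.span ℂ (evSyz n f p ∪ {p}))

/-- The dehomogenization `g(y_1,…,y_n) = f(1,y_1,…,y_n)`. -/
def dehom (n : ℕ) (f : MvPolynomial (Fin (n + 1)) ℂ) : MvPolynomial (Fin n) ℂ :=
  aeval (Fin.cons (1 : MvPolynomial (Fin n) ℂ) fun i => X i) f

/-- `D = V(f)` is strongly Euler homogeneous at `p` (with `p_0 = 1`): there exist an open
neighborhood `U` of `q = (p_1,…,p_n)` and analytic functions `a_i` on `U` vanishing at `q`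
with `g = ∑ a_i ∂g/∂y_i` on `U`, where `g` is the dehomogenization of `f`. -/
def StronglyEulerHomogeneousAt (n : ℕ) (f : MvPolynomial (Fin (n + 1)) ℂ)
    (p : Fin (n + 1) → ℂ) : Prop :=
  ∃ (U : Set (Fin n → ℂ)) (a : Fin n → (Fin n → ℂ) → ℂ),
    IsOpen U ∧ (fun i => p i.succ) ∈ U ∧
    (∀ i, ∀ y ∈ U, AnalyticAt ℂ (a i) y) ∧
    (∀ i, a i (fun j => p j.succ) = 0) ∧
    ∀ y ∈ U,
      eval y (dehom n f) = ∑ i, a i y * eval y (pderiv i (dehom n f))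

/-- `p` is an at most isolated singular point of `D`: on some neighborhood of
`q = (p_1,…,p_n)`, the only point where `g` and all its partial derivatives vanish is `q`. -/
def AtMostIsolatedSingAt (n : ℕ) (f : MvPolynomial (Fin (n + 1)) ℂ)
    (p : Fin (n + 1) → ℂ) : Prop :=
  ∃ U₀ : Set (Fin n → ℂ), IsOpen U₀ ∧ (fun i => p i.succ) ∈ U₀ ∧
    ∀ y ∈ U₀, (eval y (dehom n f) = 0 ∧ ∀ i, eval y (pderiv i (dehom n f)) = 0) →
      y = (fun i => p i.succ)

lemma aeval_dehom_smul {σ A : Type*} [CommRing A] [Algebra ℂ A] (h : MvPolynomial σ ℂ) (m : ℕ)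
    (hh : h.IsHomogeneous m) (c : A) (x : σ → A) :
    aeval (fun i => c * x i) h = c ^ m * aeval x h := by
  rw [aeval_def, aeval_def, eval₂_eq, eval₂_eq, Finset.mul_sum]
  refine Finset.sum_congr rfl fun s hs => ?_
  rw [hh.degree_eq_sum_deg_support hs, ← Finset.prod_pow_eq_pow_sum]
  simp_rw [mul_pow]
  rw [Finset.prod_mul_distrib]
  ring

lemma eval_smul_hom {σ : Type*} (h : MvPolynomial σ ℂ) (m : ℕ)
    (hh : h.IsHomogeneous m) (c : ℂ) (x : σ → ℂ) :
    eval (fun i => c * x i) h = c ^ m * eval x h := by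
  have := aeval_dehom_smul h m hh c x
  simpa [coe_aeval_eq_eval] using this

lemma eval_dehom (n : ℕ) (h : MvPolynomial (Fin (n + 1)) ℂ) (y : Fin n → ℂ) :
    eval y (dehom n h) = eval (Fin.cons 1 y) h := by
  induction h using MvPolynomial.induction_on with
  | C a => simp [dehom]
  | add p q hp hq => simp only [dehom, map_add] at *; rw [hp, hq]
  | mul_X p i hp =>
    simp only [dehom, map_mul, aeval_X, eval_X] at *
    rw [hp]
    congr 1
    refine Fin.cases ?_ (fun j => ?_) i <;> simp

lemma pderiv_dehom (n : ℕ) (h : MvPolynomial (Fin (n + 1)) ℂ) (i : Fin n) :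
    pderiv i (dehom n h) = dehom n (pderiv i.succ h) := by
  induction h using MvPolynomial.induction_on with
  | C a => simp [dehom]
  | add p q hp hq => simp only [dehom, map_add] at *; rw [hp, hq]
  | mul_X p j hp =>
    simp only [dehom, map_mul, aeval_X, pderiv_mul, map_add] at *
    rw [hp]
    congr 1
    refine Fin.cases ?_ (fun k => ?_) j
    · simp [pderiv_X]
    · by_cases hki : k = i
      · subst hki; simp
      · have : k.succ ≠ i.succ := fun h => hki (Fin.succ_injective _ h)
        simp [pderiv_X_of_ne hki, pderiv_X_of_ne this]

lemma pderiv_swap {σ : Type*} (i j : σ) (h : MvPolynomial σ ℂ) :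
    pderiv i (pderiv j h) = pderiv j (pderiv i h) := by
  classical
  induction h using MvPolynomial.induction_on with
  | C a => simp
  | add p q hp hq => simp only [map_add]; rw [hp, hq]
  | mul_X p k hp =>
    simp only [pderiv_mul, map_add, hp, pderiv_X, Pi.single_apply]
    split_ifs <;> simp <;> ring

lemma hasDerivAt_eval {m : ℕ} (h : MvPolynomial (Fin m) ℂ) (γ : ℝ → Fin m → ℂ)
    (v : Fin m → ℂ) (t : ℝ) (hγ : HasDerivAt γ v t) :
    HasDerivAt (fun s => eval (γ s) h) (∑ i, v i * eval (γ t) (pderiv i h)) t := by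
  induction h using MvPolynomial.induction_on with
  | C a => simpa using hasDerivAt_const t a
  | add p q hp hq =>
    simp only [map_add, mul_add, Finset.sum_add_distrib]
    exact hp.add hq
  | mul_X p k hp =>
    simp only [map_mul, eval_X]
    have hk : HasDerivAt (fun s => γ s k) (v k) t := (hasDerivAt_pi.1 hγ) k
    refine (hp.mul hk).congr_deriv (Eq.symm ?_)
    simp only [pderiv_mul, map_add, map_mul, eval_X, mul_add, Finset.sum_add_distrib, pderiv_X,
      Finset.sum_mul]
    congr 1
    · exact Finset.sum_congr rfl fun i _ => by ring
    · rw [Finset.sum_eq_single k]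
      · simp; ring
      · intro b _ hb
        simp [Pi.single_apply, hb.symm]
      · simp

lemma contDiff_eval_poly {m : ℕ} (h : MvPolynomial (Fin m) ℂ) :
    ContDiff ℝ 1 (fun x : Fin m → ℂ => eval x h) := by
  induction h using MvPolynomial.induction_on with
  | C a => simpa using contDiff_const
  | add p q hp hq => simpa using hp.add hq
  | mul_X p k hp =>
    simp only [map_mul, eval_X]
    exact hp.mul (contDiff_apply ℝ ℂ k)

lemma exists_curve (n : ℕ) (f : MvPolynomial (Fin (n + 1)) ℂ) (p : Fin (n + 1) → ℂ)
    (a : Fin (n + 1) → MvPolynomial (Fin (n + 1)) ℂ) (ha : ∑ i, a i * pderiv i f = 0)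
    (hp : ∀ i, eval p (pderiv i f) = 0) :
    ∃ γ : ℝ → Fin (n + 1) → ℂ, γ 0 = p ∧ HasDerivAt γ (fun i => eval p (a i)) 0 ∧
      ∃ b > (0 : ℝ), ∀ t ∈ Set.Icc 0 b, ∀ j, eval (γ t) (pderiv j f) = 0 := by
  have hc : ContDiff ℝ 1 (fun x : Fin (n + 1) → ℂ => fun i => eval x (a i)) :=
    contDiff_pi.2 fun i => contDiff_eval_poly (a i)
  obtain ⟨γ, h0, ε, hε, hγ⟩ :=
    (hc.contDiffAt (x := p)).exists_forall_mem_closedBall_exists_eq_forall_mem_Ioo_hasDerivAt₀ 0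
  simp only [zero_sub, zero_add] at hγ
  refine ⟨γ, h0, ?_, ε / 2, by positivity, ?_⟩
  · have := hγ 0 ⟨by linarith, hε⟩
    rwa [h0] at this
  have hsub : ∀ t ∈ Set.Icc 0 (ε / 2), t ∈ Set.Ioo (-ε) ε := fun t ht =>
    ⟨by linarith [ht.1], by linarith [ht.2]⟩
  have hγc : ContinuousOn γ (Set.Icc 0 (ε / 2)) := fun t ht =>
    (hγ t (hsub t ht)).continuousAt.continuousWithinAt
  have hM : ∀ i j, ∃ M, ∀ t ∈ Set.Icc 0 (ε / 2), ‖eval (γ t) (pderiv j (a i))‖ ≤ M := by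
    intro i j
    refine isCompact_Icc.exists_bound_of_continuousOn ?_
    exact (MvPolynomial.continuous_eval (pderiv j (a i))).comp_continuousOn hγc
  choose M hM using hM
  have hlin : ∀ t j, ∑ i, eval (γ t) (a i) * eval (γ t) (pderiv i (pderiv j f))
      = - ∑ i, eval (γ t) (pderiv j (a i)) * eval (γ t) (pderiv i f) := by
    intro t j
    have h1 := congrArg (fun h => eval (γ t) (pderiv j h)) ha
    simp only [map_sum, pderiv_mul, map_add, map_mul, map_zero, Finset.sum_add_distrib] at h1
    have h2 : ∑ i, eval (γ t) (a i) * eval (γ t) (pderiv i (pderiv j f))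
        = ∑ i, eval (γ t) (a i) * eval (γ t) (pderiv j (pderiv i f)) :=
      Finset.sum_congr rfl fun i _ => by rw [pderiv_swap]
    rw [h2, eq_neg_iff_add_eq_zero, add_comm]
    linear_combination h1
  have hder : ∀ t ∈ Set.Icc 0 (ε / 2), HasDerivAt (fun s => fun j => eval (γ s) (pderiv j f))
      (fun j => - ∑ i, eval (γ t) (pderiv j (a i)) * eval (γ t) (pderiv i f)) t := by
    intro t ht
    refine hasDerivAt_pi.2 fun j => ?_
    have := hasDerivAt_eval (pderiv j f) γ _ t (hγ t (hsub t ht))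
    rwa [hlin] at this
  have key := eq_zero_of_abs_deriv_le_mul_abs_self_of_eq_zero_right
    (f := fun s => fun j => eval (γ s) (pderiv j f))
    (f' := fun t => fun j => - ∑ i, eval (γ t) (pderiv j (a i)) * eval (γ t) (pderiv i f))
    (K := ∑ i, ∑ j, |M i j|) (a := 0) (b := ε / 2)
    (fun t ht => (hder t ht).continuousAt.continuousWithinAt)
    (fun t ht => (hder t (Set.Ico_subset_Icc_self ht)).hasDerivWithinAt)
    (by funext j; simp [h0, hp])
    (by
      intro t ht
      have ht := Set.Ico_subset_Icc_self ht
      refine (pi_norm_le_iff_of_nonneg (by positivity)).2 fun j => ?_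
      rw [norm_neg, Finset.sum_mul]
      refine (norm_sum_le _ _).trans (Finset.sum_le_sum fun i _ => ?_)
      rw [norm_mul]
      gcongr
      · refine (hM i j t ht).trans ((le_abs_self _).trans ?_)
        exact Finset.single_le_sum (f := fun j => |M i j|) (fun _ _ => abs_nonneg _)
          (Finset.mem_univ j)
      · exact norm_le_pi_norm (fun j => eval (γ t) (pderiv j f)) i)
  intro t ht j
  exact congrFun (key t ht) j

/-- In two variables, a homogeneous form vanishing at `p` is divisible by the linear form. -/
lemma linear_dvd (h : MvPolynomial (Fin 2) ℂ) (m : ℕ) (hh : h.IsHomogeneous m)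
    (p : Fin 2 → ℂ) (hp0 : p 0 = 1) (hp : eval p h = 0) :
    (X 1 - C (p 1) * X 0 : MvPolynomial (Fin 2) ℂ) ∣ h := by
  rw [← Ideal.mem_span_singleton, ← Ideal.Quotient.eq_zero_iff_mem]
  set I := Ideal.span {(X 1 - C (p 1) * X 0 : MvPolynomial (Fin 2) ℂ)} with hI
  have h1 : Ideal.Quotient.mk I h = aeval (fun i => Ideal.Quotient.mk I (X i)) h := by
    have : (Ideal.Quotient.mkₐ ℂ I) = aeval (fun i => Ideal.Quotient.mk I (X i)) := by
      ext i
      simp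
    exact congrArg (fun φ => φ h) this
  have h2 : (fun i => Ideal.Quotient.mk I (X i)) =
      fun i => Ideal.Quotient.mk I (X 0) *
        algebraMap ℂ (MvPolynomial (Fin 2) ℂ ⧸ I) (p i) := by
    funext i
    fin_cases i
    · simp [hp0]
    · have : Ideal.Quotient.mk I (X 1) = Ideal.Quotient.mk I (C (p 1) * X 0) := by
        rw [Ideal.Quotient.eq]
        exact Ideal.mem_span_singleton_self _
      simp only [Fin.mk_one]
      rw [this, map_mul, mul_comm]
      rfl
  rw [h1, h2, aeval_dehom_smul h m hh]
  have h3 : aeval (fun i => algebraMap ℂ (MvPolynomial (Fin 2) ℂ ⧸ I) (p i)) h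
      = algebraMap ℂ _ (eval p h) := by
    rw [← coe_aeval_eq_eval, RingHom.coe_coe]
    exact aeval_algebraMap_apply _ p h
  rw [h3, hp]
  simp

lemma two_var (f : MvPolynomial (Fin 2) ℂ) (d : ℕ) (hsf : Squarefree f) (hhom : f.IsHomogeneous d)
    (p : Fin 2 → ℂ) (hp0 : p 0 = 1) (hpf : eval p f = 0)
    (h1 : eval p (pderiv 1 f) = 0) : False := by
  obtain ⟨h, hh⟩ := linear_dvd f d hhom p hp0 hpf
  have hd := linear_dvd _ _ (hhom.pderiv (i := 1)) p hp0 h1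
  have hl : pderiv 1 (X 1 - C (p 1) * X 0 : MvPolynomial (Fin 2) ℂ) = 1 := by
    simp [pderiv_X]
  have hh' := congrArg (pderiv 1) hh
  rw [pderiv_mul, hl, one_mul] at hh'
  rw [hh'] at hd
  have hdh := (dvd_add_left (Dvd.intro _ rfl)).1 hd
  have hu := hsf (X 1 - C (p 1) * X 0) (by
    conv_rhs => rw [hh]
    exact mul_dvd_mul_left _ hdh)
  have := hu.map (eval p)
  simp [hp0] at this

lemma sing_not_rank (n d : ℕ) (hn : 1 ≤ n) (hd : 1 ≤ d)
    (f : MvPolynomial (Fin (n + 1)) ℂ) (hsf : Squarefree f) (hhom : f.IsHomogeneous d)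
    (p : Fin (n + 1) → ℂ) (hp0 : p 0 = 1) (hpf : eval p f = 0)
    (hiso : AtMostIsolatedSingAt n f p) (hp : ∀ i, eval p (pderiv i f) = 0) :
    syzRank n f p ≠ n := by
  intro hr
  rcases hn.eq_or_lt with rfl | hn2
  · exact two_var f d hsf hhom p hp0 hpf (hp 1)
  have hex : ∃ a ∈ syzSet n f, (fun i => eval p (a i)) ∉ Submodule.span ℂ {p} := by
    by_contra! hcon
    have hle : Submodule.span ℂ (evSyz n f p) ≤ Submodule.span ℂ {p} := by
      rw [Submodule.span_le]
      rintro _ ⟨a, ha, rfl⟩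
      exact hcon a ha
    have h1 := Submodule.finrank_mono hle
    have h2 := finrank_span_le_card (R := ℂ) ({p} : Set (Fin (n + 1) → ℂ))
    rw [syzRank] at hr
    simp at h2
    omega
  obtain ⟨a, ha, hnot⟩ := hex
  obtain ⟨γ, h0, hγ, b, hb, hvan⟩ := exists_curve n f p a ha hp
  obtain ⟨U, hU, hqU, hiso⟩ := hiso
  apply hnot
  have hγi : ∀ i, HasDerivAt (fun t => γ t i) (eval p (a i)) 0 := hasDerivAt_pi.1 hγ
  have hc0 : ContinuousAt (fun t => γ t 0) 0 := (hγi 0).continuousAt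
  have hne : ∀ᶠ t in nhds (0 : ℝ), γ t 0 ≠ 0 := hc0.eventually_ne (by simp [h0, hp0])
  have hyc : ContinuousAt (fun t => fun i : Fin n => γ t i.succ / γ t 0) 0 :=
    continuousAt_pi.2 fun i => (hγi i.succ).continuousAt.div hc0 (by simp [h0, hp0])
  have hyU : ∀ᶠ t in nhds (0 : ℝ), (fun i : Fin n => γ t i.succ / γ t 0) ∈ U := by
    refine hyc.eventually_mem (hU.mem_nhds ?_)
    simpa [h0, hp0] using hqU
  have hIcc : ∀ᶠ t in nhdsWithin (0 : ℝ) (Set.Ici 0), t ∈ Set.Icc 0 b := Icc_mem_nhdsGE hb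
  have hev : ∀ᶠ t in nhdsWithin (0 : ℝ) (Set.Ici 0), γ t = fun i => γ t 0 * p i := by
    filter_upwards [hIcc, nhdsWithin_le_nhds hne, nhdsWithin_le_nhds hyU] with t ht hnt hUt
    have hcons : (Fin.cons 1 (fun i : Fin n => γ t i.succ / γ t 0) : Fin (n + 1) → ℂ)
        = fun i => (γ t 0)⁻¹ * γ t i := by
      funext i
      refine Fin.cases ?_ (fun j => ?_) i
      · simp [hnt]
      · simp [div_eq_inv_mul]
    have hft : eval (γ t) f = 0 := by
      have := congrArg (eval (γ t)) hhom.sum_X_mul_pderiv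
      simp [hvan t ht] at this
      rcases this with h | h
      · omega
      · exact h
    have := hiso _ hUt ⟨by rw [eval_dehom, hcons, eval_smul_hom f d hhom, hft, mul_zero],
      fun i => by
        rw [pderiv_dehom, eval_dehom, hcons, eval_smul_hom _ _ hhom.pderiv, hvan t ht, mul_zero]⟩
    funext i
    refine Fin.cases ?_ (fun j => ?_) i
    · simp [hp0]
    · rw [← congrFun this j]
      field_simp
  have hd1 : HasDerivWithinAt γ (fun i => eval p (a i)) (Set.Ici 0) 0 := hγ.hasDerivWithinAt
  have hd2 : HasDerivWithinAt γ (fun i => eval p (a 0) * p i) (Set.Ici 0) 0 := by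
    have : HasDerivAt (fun t => fun i => γ t 0 * p i) (fun i => eval p (a 0) * p i) (0 : ℝ) :=
      hasDerivAt_pi.2 fun i => (hγi 0).mul_const (p i)
    exact this.hasDerivWithinAt.congr_of_eventuallyEq hev (by funext i; simp [h0, hp0])
  have heq := (uniqueDiffOn_Ici (0 : ℝ) 0 Set.self_mem_Ici).eq_deriv _ hd1 hd2
  rw [heq]
  exact Submodule.mem_span_singleton.2 ⟨eval p (a 0), rfl⟩

lemma smooth_rank (n : ℕ) (f : MvPolynomial (Fin (n + 1)) ℂ)
    (p : Fin (n + 1) → ℂ) (k : Fin (n + 1)) (hk : eval p (pderiv k f) ≠ 0) :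
    syzRank n f p = n := by
  classical
  let φ : (Fin (n + 1) → ℂ) →ₗ[ℂ] ℂ :=
    ∑ i, eval p (pderiv i f) • LinearMap.proj (R := ℂ) (φ := fun _ : Fin (n + 1) => ℂ) i
  have hφ : ∀ v, φ v = ∑ i, eval p (pderiv i f) * v i := fun v => by simp [φ]
  have hspan : Submodule.span ℂ (evSyz n f p) = LinearMap.ker φ := by
    apply le_antisymm
    · rw [Submodule.span_le]
      rintro _ ⟨a, ha, rfl⟩
      have := congrArg (eval p) (show ∑ i, a i * pderiv i f = 0 from ha)
      simp only [map_sum, map_mul, map_zero] at this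
      rw [SetLike.mem_coe, LinearMap.mem_ker, hφ, ← this]
      exact Finset.sum_congr rfl fun i _ => mul_comm _ _
    · intro v hv
      rw [LinearMap.mem_ker, hφ] at hv
      let w : Fin (n + 1) → Fin (n + 1) → MvPolynomial (Fin (n + 1)) ℂ := fun j i =>
        (if i = j then pderiv k f else 0) - (if i = k then pderiv j f else 0)
      have hw : ∀ j, (fun i => eval p (w j i)) ∈ Submodule.span ℂ (evSyz n f p) := by
        intro j
        refine Submodule.subset_span ⟨w j, ?_, rfl⟩
        simp only [w, syzSet, Set.mem_setOf_eq, sub_mul, Finset.sum_sub_distrib,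
          ite_mul, zero_mul, Finset.sum_ite_eq', Finset.mem_univ, if_true]
        ring
      have hv2 : v = ∑ j, ((eval p (pderiv k f))⁻¹ * v j) • (fun i => eval p (w j i)) := by
        funext i
        simp only [Finset.sum_apply, Pi.smul_apply, smul_eq_mul, w, map_sub, mul_sub,
          Finset.sum_sub_distrib]
        have e1 : ∑ x, (eval p (pderiv k f))⁻¹ * v x * eval p (if i = x then pderiv k f else 0)
            = v i := by
          rw [Finset.sum_eq_single i]
          · simp; field_simp
          · intro b _ hb; simp [hb.symm]
          · simp
        have e2 : ∑ x, (eval p (pderiv k f))⁻¹ * v x * eval p (if i = k then pderiv x f else 0)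
            = 0 := by
          split_ifs
          · have : ∀ x, (eval p (pderiv k f))⁻¹ * v x * eval p (pderiv x f)
                = (eval p (pderiv k f))⁻¹ * (eval p (pderiv x f) * v x) := fun x => by ring
            simp_rw [this]
            rw [← Finset.mul_sum, hv, mul_zero]
          · simp
        rw [e1, e2, sub_zero]
      rw [hv2]
      exact Submodule.sum_mem _ fun j _ => Submodule.smul_mem _ _ (hw j)
  rw [syzRank, hspan]
  have hsurj : Function.Surjective φ := by
    apply LinearMap.surjective
    intro h
    apply hk
    have := hφ (Pi.single k 1)
    rw [h] at this
    simpa [Pi.single_apply] using this.symm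
  have := LinearMap.finrank_range_add_finrank_ker φ
  rw [LinearMap.range_eq_top.2 hsurj, finrank_top] at this
  simp at this
  omega

/-- If `p` is an at most isolated singular point of `D = V(f)`, then `rk M'_f(p) = n` iff `p`
is a smooth point of `D`, i.e. some partial derivative of the dehomogenization `g` is
nonzero at `q`. -/
theorem syzRank_eq_n_iff_smooth (n d : ℕ) (hn : 1 ≤ n) (hd : 1 ≤ d)
    (f : MvPolynomial (Fin (n + 1)) ℂ) (hsf : Squarefree f) (hhom : f.IsHomogeneous d)
    (p : Fin (n + 1) → ℂ) (hp0 : p 0 = 1) (hpf : eval p f = 0)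
    (hiso : AtMostIsolatedSingAt n f p) :
    syzRank n f p = n ↔
      ∃ i : Fin n, eval (fun j => p j.succ) (pderiv i (dehom n f)) ≠ 0 := by
  have hcons : (Fin.cons 1 (fun j => p j.succ) : Fin (n + 1) → ℂ) = p := by
    funext i
    refine Fin.cases ?_ (fun j => ?_) i
    · simp [hp0]
    · simp
  have hev : ∀ i : Fin n, eval (fun j => p j.succ) (pderiv i (dehom n f))
      = eval p (pderiv i.succ f) := fun i => by
    rw [pderiv_dehom, eval_dehom, hcons]
  simp_rw [hev]
  constructor
  · intro hr
    by_contra! hcon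
    refine sing_not_rank n d hn hd f hsf hhom p hp0 hpf hiso ?_ hr
    refine Fin.cases ?_ hcon
    have := congrArg (eval p) hhom.sum_X_mul_pderiv
    simpa [Fin.sum_univ_succ, hcon, hp0, hpf] using this
  · rintro ⟨i, hi⟩
    exact smooth_rank n f p i.succ hi

end
end

section
/- Incidence criterion for strong Euler homogeneity: With notation as in the context, D is strongly Euler homogeneous at p if and only if every vector y ∈ ℂ^{n+1} satisfying ∑_{i=0}^n a_i(p)·y_i = 0 for all a ∈ K also satisfies ∑_{i=0}^n p_i·y_i = 0 (i.e. the fiber over p of the scheme Z_f cut out by the Jacobian syzygies is contained in the incidence variety I = V(∑ x_i y_i)). -/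
open MvPolynomial

noncomputable section

open Filter Topology Asymptotics in
theorem aux_univ (Q : Polynomial ℂ) (N : ℕ)
    (h : (fun t : ℂ => Q.eval t) =O[𝓝 0] fun t => t ^ N) (k : ℕ) (hk : k < N) :
    Q.coeff k = 0 := by
  by_cases hQ : Q = 0
  · simp [hQ]
  obtain ⟨R, hR, hnd⟩ := Polynomial.exists_eq_pow_rootMultiplicity_mul_and_not_dvd Q hQ 0
  set r := Q.rootMultiplicity 0
  simp only [map_zero, sub_zero] at hR hnd
  rw [Polynomial.X_dvd_iff] at hnd
  have hr : N ≤ r := by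
    by_contra hlt
    push Not at hlt
    apply hnd
    have h1 : (fun t : ℂ => R.eval t) =O[𝓝[≠] 0] fun t => t ^ (N - r) := by
      have h2 := (isBigO_refl (fun t : ℂ => (t ^ r)⁻¹) (𝓝[≠] 0)).mul
        (h.mono (nhdsWithin_le_nhds (s := {0}ᶜ)))
      refine (h2.congr' ?_ ?_)
      · filter_upwards [self_mem_nhdsWithin] with t ht
        have ht : t ≠ 0 := ht
        rw [hR]
        simp [ht]
      · filter_upwards [self_mem_nhdsWithin] with t ht
        have ht : t ≠ 0 := ht
        rw [pow_sub₀ _ ht hlt.le, mul_comm]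
    have h3 : Tendsto (fun t : ℂ => t ^ (N - r)) (𝓝[≠] 0) (𝓝 0) := by
      have : Tendsto (fun t : ℂ => t ^ (N - r)) (𝓝 0) (𝓝 (0 ^ (N - r))) :=
        (continuous_pow (N - r)).tendsto 0
      rw [zero_pow (by omega)] at this
      exact this.mono_left nhdsWithin_le_nhds
    have h4 := h1.trans_tendsto h3
    have h5 : Tendsto (fun t : ℂ => R.eval t) (𝓝[≠] 0) (𝓝 (R.eval 0)) :=
      (R.continuous.tendsto 0).mono_left nhdsWithin_le_nhds
    rw [Polynomial.coeff_zero_eq_eval_zero]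
    exact tendsto_nhds_unique h5 h4
  rw [hR, Polynomial.coeff_X_pow_mul', if_neg (by omega)]

theorem aux_hom_eval {σ : Type*} (f : MvPolynomial σ ℂ) (d : ℕ)
    (hf : f.IsHomogeneous d) (t : ℂ) (v : σ → ℂ) :
    eval (fun i => t * v i) f = t ^ d * eval v f := by
  rw [eval_eq, eval_eq, Finset.mul_sum]
  refine Finset.sum_congr rfl fun s hs => ?_
  have h := hf (mem_support_iff.mp hs)
  replace h : s.degree = d := by
    rw [Finsupp.degree_eq_weight_one]
    exact h
  rw [Finsupp.degree_apply] at h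
  simp only [mul_pow, Finset.prod_mul_distrib]
  rw [Finset.prod_pow_eq_pow_sum, h]
  ring

open Filter Topology Asymptotics in
theorem aux_mem (m : ℕ) (P : MvPolynomial (Fin m) ℂ) (N : ℕ)
    (h : (fun y : Fin m → ℂ => eval y P) =O[𝓝 0] fun y => ‖y‖ ^ N) :
    P ∈ idealOfVars (Fin m) ℂ ^ N := by
  rw [mem_pow_idealOfVars_iff']
  intro x hx
  have hc : homogeneousComponent x.degree P = 0 := by
    apply MvPolynomial.funext
    intro v
    let Q : Polynomial ℂ := ∑ k ∈ Finset.range (P.totalDegree + 1),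
      Polynomial.C (eval v (homogeneousComponent k P)) * Polynomial.X ^ k
    have hQ : ∀ t : ℂ, Q.eval t = eval (t • v) P := by
      intro t
      conv_rhs => rw [← sum_homogeneousComponent P, map_sum]
      rw [Polynomial.eval_finsetSum]
      refine Finset.sum_congr rfl fun k _ => ?_
      have := aux_hom_eval _ k (homogeneousComponent_isHomogeneous k P) t v
      simp only [Polynomial.eval_mul, Polynomial.eval_C, Polynomial.eval_pow, Polynomial.eval_X]
      rw [mul_comm, ← this]
      rfl
    have hO : (fun t : ℂ => Q.eval t) =O[𝓝 0] fun t => t ^ N := by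
      have ht : Tendsto (fun t : ℂ => t • v) (𝓝 0) (𝓝 0) := by
        have : Continuous (fun t : ℂ => t • v) := by fun_prop
        simpa using this.tendsto 0
      have h2 := h.comp_tendsto ht
      refine (h2.congr_left (fun t => (hQ t).symm)).trans ?_
      refine IsBigO.of_bound (‖v‖ ^ N) (Eventually.of_forall fun t => ?_)
      simp [norm_smul, mul_pow, mul_comm]
    have h3 := aux_univ Q N hO x.degree hx
    simp only [Q, Polynomial.finsetSum_coeff, Polynomial.coeff_C_mul_X_pow] at h3
    rw [Finset.sum_ite_eq] at h3
    split_ifs at h3 with hmem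
    · simpa using h3
    · rw [homogeneousComponent_eq_zero _ _ (by simpa using hmem)]
  have := congrArg (coeff x) hc
  rw [coeff_homogeneousComponent] at this
  simpa using this

theorem aux_multilin (m k : ℕ) (M : ContinuousMultilinearMap ℂ (fun _ : Fin k => Fin m → ℂ) ℂ) :
    ∃ P : MvPolynomial (Fin m) ℂ, ∀ y, eval y P = M (fun _ => y) := by
  refine ⟨∑ r : Fin k → Fin m, C (M fun j => Pi.single (r j) 1) * ∏ j, X (r j), fun y => ?_⟩
  have hy : y = ∑ i, y i • (Pi.single i 1 : Fin m → ℂ) := by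
    ext j
    simp [Finset.sum_apply, Pi.single_apply]
  conv_rhs => rw [hy]
  rw [ContinuousMultilinearMap.map_sum]
  simp only [map_sum, map_mul, eval_C, map_prod, eval_X]
  refine Finset.sum_congr rfl fun r _ => ?_
  rw [ContinuousMultilinearMap.map_smul_univ, smul_eq_mul, mul_comm]

open Filter Topology Asymptotics in
theorem aux_taylor (m : ℕ) (u : (Fin m → ℂ) → ℂ) (hu : AnalyticAt ℂ u 0) (N : ℕ) :
    ∃ P : MvPolynomial (Fin m) ℂ,
      (fun y => u y - eval y P) =O[𝓝 0] fun y => ‖y‖ ^ N := by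
  obtain ⟨p, hp⟩ := hu
  choose P hP using fun k => aux_multilin m k (p k)
  refine ⟨∑ k ∈ Finset.range N, P k, ?_⟩
  have := hp.isBigO_sub_partialSum_pow N
  simpa [FormalMultilinearSeries.partialSum, hP] using this

open Filter Topology Asymptotics in
theorem aux_zero (m : ℕ) {ι : Type} [Fintype ι] (F : ι → MvPolynomial (Fin m) ℂ)
    (u : ι → (Fin m → ℂ) → ℂ) (hu : ∀ i, AnalyticAt ℂ (u i) 0)
    (h : ∀ᶠ y in 𝓝 (0 : Fin m → ℂ), ∑ i, u i y * eval y (F i) = 0) :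
    ∃ a : ι → MvPolynomial (Fin m) ℂ, ∑ i, a i * F i = 0 ∧ ∀ i, eval 0 (a i) = u i 0 := by
  obtain ⟨k, hk⟩ := Ideal.exists_pow_inf_eq_pow_smul (idealOfVars (Fin m) ℂ)
    (Submodule.span (MvPolynomial (Fin m) ℂ) (Set.range F))
  choose P hP using fun i => aux_taylor m (u i) (hu i) (k + 1)
  have hw : ∑ i, P i * F i ∈ idealOfVars (Fin m) ℂ ^ (k + 1) := by
    apply aux_mem
    have h1 : (fun y => ∑ i, (u i y - eval y (P i)) * eval y (F i)) =O[𝓝 0]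
        fun y : Fin m → ℂ => ‖y‖ ^ (k + 1) := by
      refine IsBigO.fun_sum fun i _ => ?_
      have hc : (fun y : Fin m → ℂ => eval y (F i)) =O[𝓝 0] fun _ => (1 : ℝ) :=
        ((MvPolynomial.continuous_eval (F i)).tendsto 0).isBigO_one ℝ
      simpa using (hP i).mul hc
    refine IsBigO.congr' h1.neg_left ?_ (EventuallyEq.refl _ _)
    filter_upwards [h] with y hy
    simp only [sub_mul, Finset.sum_sub_distrib, hy, map_sum, map_mul]
    ring
  have hI : ∑ i, P i * F i ∈ Submodule.span (MvPolynomial (Fin m) ℂ) (Set.range F) :=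
    Submodule.sum_mem _ fun i _ => Submodule.smul_mem _ (P i) (Submodule.subset_span ⟨i, rfl⟩)
  have h2 : ∑ i, P i * F i ∈ idealOfVars (Fin m) ℂ •
      Submodule.span (MvPolynomial (Fin m) ℂ) (Set.range F) := by
    have h3 : ∑ i, P i * F i ∈ idealOfVars (Fin m) ℂ ^ (k + 1) • (⊤ : Submodule _ _) ⊓
      Submodule.span (MvPolynomial (Fin m) ℂ) (Set.range F) := ⟨by simpa using hw, hI⟩
    rw [hk (k + 1) (by omega)] at h3
    simp only [Nat.add_sub_cancel_left, pow_one] at h3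
    exact Submodule.smul_mono le_rfl inf_le_right h3
  rw [Submodule.mem_ideal_smul_span_iff_exists_sum] at h2
  obtain ⟨c, hc, hs⟩ := h2
  rw [Finsupp.sum_fintype _ _ (by simp)] at hs
  refine ⟨fun i => P i - c i, ?_, fun i => ?_⟩
  · simp only [sub_mul, Finset.sum_sub_distrib]
    rw [sub_eq_zero, ← hs]
    rfl
  · have h4 : eval 0 (c i) = 0 := by
      have := (mem_pow_idealOfVars_iff' 1 (c i)).1 (by simpa using hc i) 0 (by simp)
      rw [← constantCoeff_eq] at this
      simpa [MvPolynomial.eval_zero] using this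
    have h5 := (hP i).eq_zero_imp.self_of_nhds (by simp)
    rw [map_sub, h4, sub_zero]
    exact (sub_eq_zero.1 h5).symm

theorem aux_eval_aeval {σ τ : Type*} (h : σ → MvPolynomial τ ℂ) (y : τ → ℂ)
    (G : MvPolynomial σ ℂ) :
    eval y (aeval h G) = eval (fun i => eval y (h i)) G := by
  induction G using MvPolynomial.induction_on with
  | C a => simp
  | add p q hp hq => simp only [map_add, hp, hq]
  | mul_X p i hp => simp only [map_mul, hp, aeval_X, eval_X]

open Filter Topology Asymptotics in
theorem aux_point (m : ℕ) {ι : Type} [Fintype ι] (F : ι → MvPolynomial (Fin m) ℂ)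
    (p : Fin m → ℂ)
    (u : ι → (Fin m → ℂ) → ℂ) (hu : ∀ i, AnalyticAt ℂ (u i) p)
    (h : ∀ᶠ y in 𝓝 p, ∑ i, u i y * eval y (F i) = 0) :
    ∃ a : ι → MvPolynomial (Fin m) ℂ, ∑ i, a i * F i = 0 ∧ ∀ i, eval p (a i) = u i p := by
  let T : MvPolynomial (Fin m) ℂ →ₐ[ℂ] MvPolynomial (Fin m) ℂ := aeval fun i => X i + C (p i)
  let S : MvPolynomial (Fin m) ℂ →ₐ[ℂ] MvPolynomial (Fin m) ℂ := aeval fun i => X i - C (p i)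
  have hST : ∀ G, S (T G) = G := by
    intro G
    have : S.comp T = AlgHom.id ℂ _ := by
      ext i : 1
      simp [S, T, ← algebraMap_eq]
    exact DFunLike.congr_fun this G
  have hT : ∀ y G, eval y (T G) = eval (y + p) G := by
    intro y G
    rw [aux_eval_aeval]
    congr 2
    ext i
    simp
  have hS : ∀ y G, eval y (S G) = eval (y - p) G := by
    intro y G
    rw [aux_eval_aeval]
    congr 2
    ext i
    simp
  have ht : Tendsto (fun y : Fin m → ℂ => y + p) (𝓝 0) (𝓝 p) := by
    have : Continuous (fun y : Fin m → ℂ => y + p) := by fun_prop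
    simpa using this.tendsto 0
  obtain ⟨a, ha, ha'⟩ := aux_zero m (fun i => T (F i)) (fun i y => u i (y + p))
    (fun i => by
      have h1 : AnalyticAt ℂ (fun y : Fin m → ℂ => y + p) 0 := by fun_prop
      exact AnalyticAt.comp_of_eq (hu i) h1 (by simp))
    (by
      filter_upwards [ht.eventually h] with y hy
      simpa [hT] using hy)
  refine ⟨fun i => S (a i), ?_, fun i => ?_⟩
  · have := congrArg S ha
    simpa [hST] using this
  · rw [hS]
    simpa using ha' i

theorem aux_dehom_eval (n : ℕ) (f : MvPolynomial (Fin (n + 1)) ℂ) (y : Fin n → ℂ) :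
    eval y (dehom n f) = eval (Fin.cons 1 y : Fin (n + 1) → ℂ) f := by
  rw [dehom, aux_eval_aeval]
  congr 2
  ext i
  refine Fin.cases ?_ (fun j => ?_) i <;> simp

theorem aux_dehom_pderiv (n : ℕ) (f : MvPolynomial (Fin (n + 1)) ℂ) (i : Fin n) :
    pderiv i (dehom n f) = dehom n (pderiv i.succ f) := by
  unfold dehom
  induction f using MvPolynomial.induction_on with
  | C a => simp
  | add p q hp hq => simp only [map_add, hp, hq]
  | mul_X p j hp =>
    rw [map_mul, Derivation.leibniz, Derivation.leibniz, hp, map_add, aeval_X]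
    simp only [smul_eq_mul, map_mul, aeval_X]
    congr 2
    refine Fin.cases ?_ (fun k => ?_) j
    · simp [pderiv_X, Pi.single_apply, (Fin.succ_ne_zero i).symm]
    · by_cases hk : k = i <;> simp [pderiv_X, Pi.single_apply, hk]

theorem aux_euler (n d : ℕ) (f : MvPolynomial (Fin (n + 1)) ℂ) (hhom : f.IsHomogeneous d)
    (x : Fin (n + 1) → ℂ) :
    x 0 * eval x (pderiv 0 f) + ∑ i : Fin n, x i.succ * eval x (pderiv i.succ f)
      = d * eval x f := by
  have := congrArg (eval x) hhom.sum_X_mul_pderiv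
  rw [map_sum, Fin.sum_univ_succ] at this
  simpa using this

theorem aux_lin (n : ℕ) (f : MvPolynomial (Fin (n + 1)) ℂ) (p : Fin (n + 1) → ℂ) :
    (∃ a ∈ syzSet n f, ∀ i, eval p (a i) = p i) ↔
      ∀ y : Fin (n + 1) → ℂ,
        (∀ a ∈ syzSet n f, ∑ i, eval p (a i) * y i = 0) → ∑ i, p i * y i = 0 := by
  constructor
  · rintro ⟨a, ha, hap⟩ y hy
    simpa [hap] using hy a ha
  · intro h
    let W : Submodule ℂ (Fin (n + 1) → ℂ) :=
      { carrier := evSyz n f p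
        zero_mem' := ⟨0, by simp [syzSet], by ext; simp⟩
        add_mem' := by
          rintro _ _ ⟨a, ha, rfl⟩ ⟨b, hb, rfl⟩
          refine ⟨a + b, ?_, by ext; simp⟩
          simp only [syzSet, Set.mem_setOf_eq] at ha hb ⊢
          simp [add_mul, Finset.sum_add_distrib, ha, hb]
        smul_mem' := by
          rintro c _ ⟨a, ha, rfl⟩
          refine ⟨fun i => C c * a i, ?_, by ext; simp⟩
          simp only [syzSet, Set.mem_setOf_eq] at ha ⊢
          simp only [mul_assoc, ← Finset.mul_sum, ha, mul_zero] }
    by_contra hne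
    have hp : p ∉ W := by
      rintro ⟨a, ha, hap⟩
      exact hne ⟨a, ha, fun i => congrFun hap i⟩
    obtain ⟨φ, hφ, hW⟩ := Submodule.exists_le_ker_of_notMem hp
    have hφs : ∀ v, φ v = ∑ i, v i * φ (Pi.single i 1) := by
      intro v
      have hv : v = ∑ i, v i • (Pi.single i 1 : Fin (n + 1) → ℂ) := by
        ext j
        simp [Finset.sum_apply, Pi.single_apply]
      conv_lhs => rw [hv]
      simp
    apply hφ
    rw [hφs]
    refine h _ fun a ha => ?_
    have := hW (show (fun i => eval p (a i)) ∈ W from ⟨a, ha, rfl⟩)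
    rw [LinearMap.mem_ker, hφs] at this
    exact this

open Filter Topology in
theorem aux_forward (n d : ℕ) (hd : 1 ≤ d)
    (f : MvPolynomial (Fin (n + 1)) ℂ) (hhom : f.IsHomogeneous d)
    (p : Fin (n + 1) → ℂ) (hp0 : p 0 = 1) (h : StronglyEulerHomogeneousAt n f p) :
    ∃ a ∈ syzSet n f, ∀ i, eval p (a i) = p i := by
  obtain ⟨U, b, hU, hpU, hb, hb0, hbg⟩ := h
  let π : (Fin (n + 1) → ℂ) → Fin n → ℂ := fun x i => x i.succ / x 0
  have hπp : π p = fun i => p i.succ := by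
    ext i; simp [π, hp0]
  have hproj : ∀ i : Fin (n + 1), AnalyticAt ℂ (fun x : Fin (n + 1) → ℂ => x i) p :=
    fun i => (ContinuousLinearMap.proj (R := ℂ) (φ := fun _ : Fin (n + 1) => ℂ) i).analyticAt p
  have hπi : ∀ i : Fin n, AnalyticAt ℂ (fun x : Fin (n + 1) → ℂ => x i.succ / x 0) p :=
    fun i => (hproj _).div (hproj 0) (by simp [hp0])
  have hπ : AnalyticAt ℂ π p := AnalyticAt.pi hπi
  let u : Fin (n + 1) → (Fin (n + 1) → ℂ) → ℂ :=
    Fin.cons (fun _ => 1) fun i x => x i.succ / x 0 - d * b i (π x)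
  have hu : ∀ i, AnalyticAt ℂ (u i) p := by
    intro i
    refine Fin.cases ?_ (fun j => ?_) i
    · exact analyticAt_const
    · exact (hπi j).sub (analyticAt_const.mul
        (AnalyticAt.comp_of_eq (hb j _ hpU) hπ hπp))
  obtain ⟨a, ha, hap⟩ := aux_point (n + 1) (fun i => pderiv i f) p u hu (by
    have h1 : ∀ᶠ x in 𝓝 p, π x ∈ U :=
      hπ.continuousAt.eventually (by rw [hπp]; exact hU.mem_nhds hpU)
    have h2 : ∀ᶠ x in 𝓝 p, x 0 ≠ 0 :=
      (hproj 0).continuousAt.eventually_ne (by simp [hp0])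
    filter_upwards [h1, h2] with x hx1 hx0
    have hx : x = fun i => x 0 * (Fin.cons 1 (π x) : Fin (n + 1) → ℂ) i := by
      ext i
      refine Fin.cases ?_ (fun j => ?_) i
      · simp
      · simp [π]; field_simp
    have hder : ∀ i, eval x (pderiv i f) =
        x 0 ^ (d - 1) * eval (Fin.cons 1 (π x) : Fin (n + 1) → ℂ) (pderiv i f) := by
      intro i
      conv_lhs => rw [hx]
      exact aux_hom_eval _ _ hhom.pderiv _ _
    have hg := hbg _ hx1
    simp only [aux_dehom_pderiv, aux_dehom_eval] at hg
    have he := aux_euler n d f hhom (Fin.cons 1 (π x))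
    rw [hg] at he
    simp only [hder]
    rw [Fin.sum_univ_succ]
    simp only [Fin.cons_zero, Fin.cons_succ, one_mul, u] at he ⊢
    rw [Finset.mul_sum] at he
    have : ∀ i : Fin n, (x i.succ / x 0 - d * b i (π x)) * (x 0 ^ (d - 1) *
        eval (Fin.cons 1 (π x) : Fin (n + 1) → ℂ) (pderiv i.succ f)) =
        x 0 ^ (d - 1) * (π x i * eval (Fin.cons 1 (π x) : Fin (n + 1) → ℂ) (pderiv i.succ f)) -
        x 0 ^ (d - 1) * (d * (b i (π x) *
          eval (Fin.cons 1 (π x) : Fin (n + 1) → ℂ) (pderiv i.succ f))) := by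
      intro i; simp only [π]; ring
    simp only [this]
    rw [Finset.sum_sub_distrib, ← Finset.mul_sum, ← Finset.mul_sum, ← he]
    ring)
  refine ⟨a, ha, fun i => ?_⟩
  rw [hap]
  refine Fin.cases ?_ (fun j => ?_) i
  · simp [u, hp0]
  · simp [u, hp0, hπp, hb0]

open Filter Topology in
theorem aux_backward (n d : ℕ) (hd : 1 ≤ d)
    (f : MvPolynomial (Fin (n + 1)) ℂ) (hhom : f.IsHomogeneous d)
    (p : Fin (n + 1) → ℂ) (hp0 : p 0 = 1)
    (h : ∃ a ∈ syzSet n f, ∀ i, eval p (a i) = p i) : StronglyEulerHomogeneousAt n f p := by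
  obtain ⟨a, ha, hap⟩ := h
  have hpc : (Fin.cons 1 (fun i : Fin n => p i.succ) : Fin (n + 1) → ℂ) = p := by
    ext i
    refine Fin.cases ?_ (fun j => ?_) i <;> simp [hp0]
  have han : ∀ (G : MvPolynomial (Fin n) ℂ) y, AnalyticAt ℂ (fun y => eval y G) y :=
    fun G y => AnalyticOnNhd.eval_mvPolynomial G y (Set.mem_univ _)
  have hd0 : (d : ℂ) ≠ 0 := by exact_mod_cast (by omega : d ≠ 0)
  refine ⟨{y | eval y (dehom n (a 0)) ≠ 0},
    fun i y => (d : ℂ)⁻¹ * (y i - eval y (dehom n (a i.succ)) / eval y (dehom n (a 0))),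
    ?_, ?_, ?_, ?_, ?_⟩
  · exact isOpen_ne_fun (MvPolynomial.continuous_eval _) continuous_const
  · simp [aux_dehom_eval, hpc, hap, hp0]
  · intro i y hy
    refine analyticAt_const.mul (AnalyticAt.sub ?_ ((han _ y).div (han _ y) hy))
    simpa using han (X i) y
  · intro i
    simp [aux_dehom_eval, hpc, hap, hp0]
  · intro y hy
    simp only [Set.mem_setOf_eq, aux_dehom_eval, aux_dehom_pderiv] at hy ⊢
    set x : Fin (n + 1) → ℂ := Fin.cons 1 y with hx
    have he := aux_euler n d f hhom x
    have hs := congrArg (eval x) ha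
    rw [map_sum, Fin.sum_univ_succ] at hs
    simp only [map_mul, map_zero] at hs
    simp only [hx, Fin.cons_zero, Fin.cons_succ, one_mul] at he
    rw [← hx] at he
    have : ∀ i : Fin n, (d : ℂ)⁻¹ * (y i - eval x (a i.succ) / eval x (a 0)) *
        eval x (pderiv i.succ f) =
        (d : ℂ)⁻¹ * (y i * eval x (pderiv i.succ f)) -
        (d : ℂ)⁻¹ * (eval x (a 0))⁻¹ * (eval x (a i.succ) * eval x (pderiv i.succ f)) := by
      intro i; ring
    simp only [this]
    rw [Finset.sum_sub_distrib, ← Finset.mul_sum, ← Finset.mul_sum,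
      eq_neg_of_add_eq_zero_right hs, eq_sub_of_add_eq' he]
    field_simp
    ring

/-- **Incidence criterion for strong Euler homogeneity.** `D = V(f)` is strongly Euler
homogeneous at `p` iff every vector `y` annihilated by all evaluated Jacobian syzygies at `p`
(i.e. every point of the fiber of `Z_f` over `p`) satisfies `∑ p_i y_i = 0` (lies on the
incidence variety `I`). -/
theorem strongly_euler_homogeneous_iff_fiber_in_incidence (n d : ℕ) (hn : 1 ≤ n) (hd : 1 ≤ d)
    (f : MvPolynomial (Fin (n + 1)) ℂ) (hsf : Squarefree f) (hhom : f.IsHomogeneous d)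
    (p : Fin (n + 1) → ℂ) (hp0 : p 0 = 1) (hpf : eval p f = 0) :
    StronglyEulerHomogeneousAt n f p ↔
      ∀ y : Fin (n + 1) → ℂ,
        (∀ a ∈ syzSet n f, ∑ i, eval p (a i) * y i = 0) → ∑ i, p i * y i = 0 := by
  rw [← aux_lin]
  exact ⟨aux_forward n d hd f hhom p hp0, aux_backward n d hd f hhom p hp0⟩

end
end
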